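/- For every realization Y ∈ ℝⁿ, ‖β̃ − β̂(U)‖² = λ̂²‖β̂(R) − β̂(U)‖² ≤ λ_min(X'X)⁻¹ α⁻¹ σ² exp(4αk₂), where λ_min(X'X) denotes the smallest eigenvalue of X'X; in particular the difference between β̃ and β̂(U) is bounded in norm by a deterministic constant times σ λ_min(X'X)^{−1/2}. -/

import Mathlib

open MeasureTheory Matrix Real Filter Topology ENNReal NNReal

noncomputable section

/-- Euclidean norm of a finite tuple. -/
def enorm2 {ι : Type*} [Fintype ι] (v : ι → ℝ) : ℝ := Real.sqrt (∑ i, v i ^ 2)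

/-- The `N(0, σ² I)` distribution on `ι → ℝ`, given by its Lebesgue density. -/
def gaussPi (ι : Type*) [Fintype ι] (σ2 : ℝ) : Measure (ι → ℝ) :=
  volume.withDensity fun x => ENNReal.ofReal
    ((2 * π * σ2) ^ (-(Fintype.card ι : ℝ) / 2) * Real.exp (-(enorm2 x) ^ 2 / (2 * σ2)))

/-- The Lebesgue density of the `N(0, σ² Q⁻¹)` distribution on `ι → ℝ`
(for `Q` symmetric positive definite). -/
def gaussCovDens {ι : Type*} [Fintype ι] [DecidableEq ι] (σ2 : ℝ) (Q : Matrix ι ι ℝ)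
    (x : ι → ℝ) : ℝ :=
  (2 * π * σ2) ^ (-(Fintype.card ι : ℝ) / 2) * Real.sqrt Q.det *
    Real.exp (-(x ⬝ᵥ Q.mulVec x) / (2 * σ2))

/-- The `N(0, σ² Q⁻¹)` distribution on `ι → ℝ` (for `Q` symmetric positive definite),
given by its Lebesgue density. -/
def gaussCov {ι : Type*} [Fintype ι] [DecidableEq ι] (σ2 : ℝ) (Q : Matrix ι ι ℝ) :
    Measure (ι → ℝ) :=
  volume.withDensity fun x => ENNReal.ofReal (gaussCovDens σ2 Q x)

open Classical in
/-- Symmetric positive semidefinite square root (junk value `0` off the psd cone). -/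
def msqrt {ι : Type*} [Fintype ι] [DecidableEq ι] (A : Matrix ι ι ℝ) : Matrix ι ι ℝ :=
  if h : A.PosSemidef then
    h.1.eigenvectorUnitary.1 * Matrix.diagonal (Real.sqrt ∘ h.1.eigenvalues) *
      (star h.1.eigenvectorUnitary : Matrix ι ι ℝ)
  else 0

open Classical in
/-- Smallest eigenvalue of a symmetric matrix (junk value `0` otherwise). -/
def lamMin {ι : Type*} [Fintype ι] [DecidableEq ι] (A : Matrix ι ι ℝ) : ℝ :=
  if h : A.IsHermitian then ⨅ i, h.eigenvalues i else 0

open Classical in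
/-- Largest eigenvalue of a symmetric matrix (junk value `0` otherwise). -/
def lamMax {ι : Type*} [Fintype ι] [DecidableEq ι] (A : Matrix ι ι ℝ) : ℝ :=
  if h : A.IsHermitian then ⨆ i, h.eigenvalues i else 0

variable {n k₁ k₂ : ℕ}

/-- First block of columns of the design matrix. -/
def X1 (X : Matrix (Fin n) (Fin k₁ ⊕ Fin k₂) ℝ) : Matrix (Fin n) (Fin k₁) ℝ :=
  X.submatrix id Sum.inl

/-- Second block of columns of the design matrix. -/
def X2 (X : Matrix (Fin n) (Fin k₁ ⊕ Fin k₂) ℝ) : Matrix (Fin n) (Fin k₂) ℝ :=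
  X.submatrix id Sum.inr

/-- Unrestricted least squares estimator. -/
def betaU (X : Matrix (Fin n) (Fin k₁ ⊕ Fin k₂) ℝ) (Y : Fin n → ℝ) : (Fin k₁ ⊕ Fin k₂) → ℝ :=
  (Xᵀ * X)⁻¹.mulVec (Xᵀ.mulVec Y)

/-- Restricted least squares estimator. -/
def betaR (X : Matrix (Fin n) (Fin k₁ ⊕ Fin k₂) ℝ) (Y : Fin n → ℝ) : (Fin k₁ ⊕ Fin k₂) → ℝ :=
  Sum.elim (((X1 X)ᵀ * X1 X)⁻¹.mulVec ((X1 X)ᵀ.mulVec Y)) (fun _ => 0)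

/-- Risk estimate of the restricted model. -/
def rR (X : Matrix (Fin n) (Fin k₁ ⊕ Fin k₂) ℝ) (σ2 : ℝ) (Y : Fin n → ℝ) : ℝ :=
  Y ⬝ᵥ Y - betaR X Y ⬝ᵥ (Xᵀ * X).mulVec (betaR X Y) + σ2 * (2 * k₁ - n)

/-- Risk estimate of the unrestricted model. -/
def rU (X : Matrix (Fin n) (Fin k₁ ⊕ Fin k₂) ℝ) (σ2 : ℝ) (Y : Fin n → ℝ) : ℝ :=
  Y ⬝ᵥ Y - betaU X Y ⬝ᵥ (Xᵀ * X).mulVec (betaU X Y) + σ2 * (2 * (k₁ + k₂) - n)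

/-- The model averaging weight `λ̂`. -/
def lamHat (α σ2 : ℝ) (X : Matrix (Fin n) (Fin k₁ ⊕ Fin k₂) ℝ) (Y : Fin n → ℝ) : ℝ :=
  Real.exp (-(α * rR X σ2 Y) / σ2) /
    (Real.exp (-(α * rR X σ2 Y) / σ2) + Real.exp (-(α * rU X σ2 Y) / σ2))

/-- Leung and Barron's model averaging estimator `β̃`. -/
def mavg (α σ2 : ℝ) (X : Matrix (Fin n) (Fin k₁ ⊕ Fin k₂) ℝ) (Y : Fin n → ℝ) :
    (Fin k₁ ⊕ Fin k₂) → ℝ :=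
  lamHat α σ2 X Y • betaR X Y + (1 - lamHat α σ2 X Y) • betaU X Y

/-- Projection on the column space of `X₁`. -/
def projR (X : Matrix (Fin n) (Fin k₁ ⊕ Fin k₂) ℝ) : Matrix (Fin n) (Fin n) ℝ :=
  X1 X * ((X1 X)ᵀ * X1 X)⁻¹ * (X1 X)ᵀ

/-- Projection on the column space of `X`. -/
def projU (X : Matrix (Fin n) (Fin k₁ ⊕ Fin k₂) ℝ) : Matrix (Fin n) (Fin n) ℝ :=
  X * (Xᵀ * X)⁻¹ * Xᵀ

/-- The distribution `P_{n,β,σ}` of `Y = Xβ + u`, `u ~ N(0, σ² Iₙ)`. -/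
def Pmeas (X : Matrix (Fin n) (Fin k₁ ⊕ Fin k₂) ℝ) (β : (Fin k₁ ⊕ Fin k₂) → ℝ) (σ2 : ℝ) :
    Measure (Fin n → ℝ) :=
  (gaussPi (Fin n) σ2).map (fun u => X.mulVec β + u)

/-- The function `h_{a,b}(ξ) = ξ / (1 + a exp(−ξ²/b))`. -/
def hfun (a b ξ : ℝ) : ℝ := ξ / (1 + a * Real.exp (-ξ ^ 2 / b))

/-- The inverse `g_{a,b}` of `h_{a,b}`. -/
def gfun (a b : ℝ) : ℝ → ℝ := Function.invFun (hfun a b)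

open Classical in
/-- `g(‖w‖) w / ‖w‖`, with the convention that this is `0` for `w = 0`. -/
def gdir (a b : ℝ) {ι : Type*} [Fintype ι] (w : ι → ℝ) : ι → ℝ :=
  if w = 0 then 0 else (gfun a b (enorm2 w) / enorm2 w) • w


/-- The finite-sample density `f_{n,β,σ}` of `√n(β̃ − β)` (Theorem 3 of the paper). -/
def fdens {n k₁ k₂ : ℕ} (X : Matrix (Fin n) (Fin k₁ ⊕ Fin k₂) ℝ)
    (β : (Fin k₁ ⊕ Fin k₂) → ℝ) (σ2 α : ℝ) (t : (Fin k₁ ⊕ Fin k₂) → ℝ) : ℝ :=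
  let a := Real.exp (2 * α * k₂)
  let b := σ2 / α
  let S := (X2 X)ᵀ * (1 - projR X) * X2 X
  let w := (Real.sqrt n)⁻¹ • (msqrt S).mulVec ((t ∘ Sum.inr) + Real.sqrt n • (β ∘ Sum.inr))
  (2 * π * σ2) ^ (-((k₁ : ℝ) + k₂) / 2) * Real.sqrt (((n : ℝ)⁻¹ • (Xᵀ * X)).det) *
    Real.exp (-(enorm2 ((Real.sqrt n)⁻¹ •
        ((msqrt ((X1 X)ᵀ * X1 X)).mulVec (t ∘ Sum.inl) +
          ((msqrt ((X1 X)ᵀ * X1 X))⁻¹ * (X1 X)ᵀ * X2 X).mulVec (t ∘ Sum.inr)))) ^ 2 /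
      (2 * σ2)) *
    (1 + Real.exp (-(α / σ2) * gfun a b (enorm2 w) ^ 2 + 2 * α * k₂)) ^ (k₂ : ℕ) *
    (1 + (2 * α / σ2) * gfun a b (enorm2 w) ^ 2 *
        (1 + Real.exp ((α / σ2) * gfun a b (enorm2 w) ^ 2 - 2 * α * k₂))⁻¹)⁻¹ *
    Real.exp (-(enorm2 (gdir a b w - (msqrt S).mulVec (β ∘ Sum.inr))) ^ 2 / (2 * σ2))

/-- The density `f_{∞,γ}` of the limiting distribution (formula (13) of the paper),
stated for a general symmetric positive definite matrix in place of `Q`. -/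
def fInfty {k₁ k₂ : ℕ} (Q : Matrix (Fin k₁ ⊕ Fin k₂) (Fin k₁ ⊕ Fin k₂) ℝ) (σ2 α : ℝ)
    (γ : Fin k₂ → ℝ) (t : (Fin k₁ ⊕ Fin k₂) → ℝ) : ℝ :=
  let a := Real.exp (2 * α * k₂)
  let b := σ2 / α
  let S := Q.toBlocks₂₂ - Q.toBlocks₂₁ * Q.toBlocks₁₁⁻¹ * Q.toBlocks₁₂
  let w := (msqrt S).mulVec ((t ∘ Sum.inr) + γ)
  (2 * π * σ2) ^ (-((k₁ : ℝ) + k₂) / 2) * Real.sqrt Q.det *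
    Real.exp (-(enorm2 ((msqrt Q.toBlocks₁₁).mulVec (t ∘ Sum.inl) +
        ((msqrt Q.toBlocks₁₁)⁻¹ * Q.toBlocks₁₂).mulVec (t ∘ Sum.inr))) ^ 2 / (2 * σ2)) *
    (1 + Real.exp (-(α / σ2) * gfun a b (enorm2 w) ^ 2 + 2 * α * k₂)) ^ (k₂ : ℕ) *
    (1 + (2 * α / σ2) * gfun a b (enorm2 w) ^ 2 *
        (1 + Real.exp ((α / σ2) * gfun a b (enorm2 w) ^ 2 - 2 * α * k₂))⁻¹)⁻¹ *
    Real.exp (-(enorm2 (gdir a b w - (msqrt S).mulVec γ)) ^ 2 / (2 * σ2))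


lemma enorm2_sq {ι : Type*} [Fintype ι] (v : ι → ℝ) : enorm2 v ^ 2 = v ⬝ᵥ v := by
  unfold enorm2
  rw [Real.sq_sqrt (Finset.sum_nonneg fun i _ => sq_nonneg _)]
  simp [dotProduct, sq]

lemma lamMin_rayleigh {ι : Type*} [Fintype ι] [DecidableEq ι] (A : Matrix ι ι ℝ)
    (hA : A.IsHermitian) (v : ι → ℝ) : lamMin A * (v ⬝ᵥ v) ≤ v ⬝ᵥ A.mulVec v := by
  have hl : ∀ i, lamMin A ≤ hA.eigenvalues i := by
    intro i
    unfold lamMin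
    rw [dif_pos hA]
    exact ciInf_le (Set.finite_range _).bddBelow i
  set c := lamMin A
  have hB : (A - algebraMap ℝ (Matrix ι ι ℝ) c).IsHermitian := by
    apply hA.sub
    rw [Matrix.algebraMap_eq_diagonal]
    exact Matrix.isHermitian_diagonal _
  have hP : (A - algebraMap ℝ (Matrix ι ι ℝ) c).PosSemidef := by
    rw [hB.posSemidef_iff_eigenvalues_nonneg]
    intro i
    have h1 := hB.eigenvalues_mem_spectrum_real i
    rw [← spectrum.sub_singleton_eq, hA.spectrum_real_eq_range_eigenvalues] at h1
    obtain ⟨x, ⟨j, rfl⟩, y, rfl, h⟩ := h1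
    have := hl j
    simp only [Pi.zero_apply]
    linarith
  have := hP.dotProduct_mulVec_nonneg v
  simp [Matrix.sub_mulVec, Algebra.algebraMap_eq_smul_one, Matrix.smul_mulVec] at this
  linarith

lemma lamMin_pos {ι : Type*} [Fintype ι] [Nonempty ι] [DecidableEq ι] (A : Matrix ι ι ℝ)
    (hA : A.PosDef) : 0 < lamMin A := by
  unfold lamMin
  rw [dif_pos hA.1]
  obtain ⟨i, hi⟩ := exists_eq_ciInf_of_finite (f := hA.1.eigenvalues)
  rw [← hi]
  exact hA.eigenvalues_pos i

lemma mulVec_inj_of_rank {m ι : Type*} [Fintype m] [Fintype ι] (X : Matrix m ι ℝ)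
    (h : X.rank = Fintype.card ι) : Function.Injective X.mulVec := by
  rw [Matrix.mulVec_injective_iff, linearIndependent_iff_card_eq_finrank_span, ← h,
    Matrix.rank_eq_finrank_span_cols, Set.finrank]

lemma gram_posDef {m ι : Type*} [Fintype m] [Fintype ι] [DecidableEq ι] (X : Matrix m ι ℝ)
    (h : Function.Injective X.mulVec) : (Xᵀ * X).PosDef := by
  have := Matrix.PosDef.conjTranspose_mul_self X h
  rwa [Matrix.conjTranspose_eq_transpose_of_trivial] at this

lemma gram_solve {m ι : Type*} [Fintype m] [Fintype ι] [DecidableEq ι] (X : Matrix m ι ℝ)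
    (h : Function.Injective X.mulVec) (z : ι → ℝ) :
    (Xᵀ * X).mulVec ((Xᵀ * X)⁻¹.mulVec z) = z := by
  rw [Matrix.mulVec_mulVec, Matrix.mul_nonsing_inv _ ((Matrix.isUnit_iff_isUnit_det _).1
    (gram_posDef X h).isUnit), Matrix.one_mulVec]

lemma mulVec_elim (X : Matrix (Fin n) (Fin k₁ ⊕ Fin k₂) ℝ) (a : Fin k₁ → ℝ) :
    X.mulVec (Sum.elim a (fun _ => 0)) = (X1 X).mulVec a := by
  ext i
  simp [Matrix.mulVec, dotProduct, X1]

lemma X1_inj (X : Matrix (Fin n) (Fin k₁ ⊕ Fin k₂) ℝ) (h : Function.Injective X.mulVec) :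
    Function.Injective (X1 X).mulVec := by
  intro a b hab
  rw [← mulVec_elim, ← mulVec_elim] at hab
  have := h hab
  ext i
  simpa using congrFun this (Sum.inl i)

lemma gram_quad {m ι : Type*} [Fintype m] [Fintype ι] (X : Matrix m ι ℝ) (a b : ι → ℝ) :
    a ⬝ᵥ (Xᵀ * X).mulVec b = X.mulVec a ⬝ᵥ X.mulVec b := by
  rw [← Matrix.mulVec_mulVec, Matrix.dotProduct_mulVec, Matrix.vecMul_transpose]

lemma dot_tmulVec {m ι : Type*} [Fintype m] [Fintype ι] (X : Matrix m ι ℝ) (a : ι → ℝ)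
    (y : m → ℝ) : a ⬝ᵥ Xᵀ.mulVec y = X.mulVec a ⬝ᵥ y := by
  rw [Matrix.dotProduct_mulVec, Matrix.vecMul_transpose]

lemma diff_quad (X : Matrix (Fin n) (Fin k₁ ⊕ Fin k₂) ℝ) (h : Function.Injective X.mulVec)
    (Y : Fin n → ℝ) :
    (betaR X Y - betaU X Y) ⬝ᵥ (Xᵀ * X).mulVec (betaR X Y - betaU X Y) =
      betaU X Y ⬝ᵥ (Xᵀ * X).mulVec (betaU X Y) -
        betaR X Y ⬝ᵥ (Xᵀ * X).mulVec (betaR X Y) := by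
  have hU : (Xᵀ * X).mulVec (betaU X Y) = Xᵀ.mulVec Y := gram_solve X h _
  have h1 : betaR X Y ⬝ᵥ (Xᵀ * X).mulVec (betaU X Y) = X.mulVec (betaR X Y) ⬝ᵥ Y := by
    rw [hU, dot_tmulVec]
  have h2 : betaR X Y ⬝ᵥ (Xᵀ * X).mulVec (betaR X Y) = X.mulVec (betaR X Y) ⬝ᵥ Y := by
    rw [gram_quad]
    unfold betaR
    rw [mulVec_elim, ← gram_quad, gram_solve _ (X1_inj X h), dot_tmulVec]
  rw [gram_quad] at h1 h2
  simp only [gram_quad, Matrix.mulVec_sub, sub_dotProduct, dotProduct_sub]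
  rw [dotProduct_comm (X.mulVec (betaU X Y)) (X.mulVec (betaR X Y))]
  linarith

/-- for every realization `Y`,
`‖β̃ − β̂(U)‖² = λ̂²‖β̂(R) − β̂(U)‖² ≤ λ_min(X'X)⁻¹ α⁻¹ σ² exp(4αk₂)`. -/
theorem statement3 {n k₁ k₂ : ℕ} (hk₁ : 0 < k₁) (hk₂ : 0 < k₂) (hn : k₁ + k₂ ≤ n)
    (X : Matrix (Fin n) (Fin k₁ ⊕ Fin k₂) ℝ) (hX : X.rank = k₁ + k₂)
    (σ α : ℝ) (hσ : 0 < σ) (hα : 0 < α) (Y : Fin n → ℝ) :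
    (enorm2 (mavg α (σ ^ 2) X Y - betaU X Y)) ^ 2 =
      (lamHat α (σ ^ 2) X Y) ^ 2 * (enorm2 (betaR X Y - betaU X Y)) ^ 2 ∧
    (lamHat α (σ ^ 2) X Y) ^ 2 * (enorm2 (betaR X Y - betaU X Y)) ^ 2 ≤
      (lamMin (Xᵀ * X))⁻¹ * α⁻¹ * σ ^ 2 * Real.exp (4 * α * k₂) := by
  have hinj : Function.Injective X.mulVec := mulVec_inj_of_rank X (by simpa using hX)
  have hPD := gram_posDef X hinj
  haveI : Nonempty (Fin k₁ ⊕ Fin k₂) := ⟨Sum.inl ⟨0, hk₁⟩⟩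
  have hlm := lamMin_pos _ hPD
  constructor
  · have : mavg α (σ ^ 2) X Y - betaU X Y =
        lamHat α (σ ^ 2) X Y • (betaR X Y - betaU X Y) := by
      ext i
      simp [mavg]
      ring
    rw [this, enorm2_sq, enorm2_sq, smul_dotProduct, dotProduct_smul, smul_eq_mul, smul_eq_mul]
    ring
  · rw [enorm2_sq]
    have hray := lamMin_rayleigh _ hPD.1 (betaR X Y - betaU X Y)
    have hq := diff_quad X hinj Y
    have hDR : rR X (σ ^ 2) Y - rU X (σ ^ 2) Y =
        (betaR X Y - betaU X Y) ⬝ᵥ (Xᵀ * X).mulVec (betaR X Y - betaU X Y)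
          - 2 * σ ^ 2 * k₂ := by
      rw [hq]
      unfold rR rU
      ring
    have hN : 0 ≤ (betaR X Y - betaU X Y) ⬝ᵥ (betaR X Y - betaU X Y) := by
      rw [← enorm2_sq]; positivity
    set D := (betaR X Y - betaU X Y) ⬝ᵥ (Xᵀ * X).mulVec (betaR X Y - betaU X Y)
    set N := (betaR X Y - betaU X Y) ⬝ᵥ (betaR X Y - betaU X Y)
    set L := lamMin (Xᵀ * X)
    have hD : 0 ≤ D := le_trans (by positivity) hray
    have hlam0 : 0 ≤ lamHat α (σ ^ 2) X Y := by unfold lamHat; positivity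
    have hlam : lamHat α (σ ^ 2) X Y ≤ Real.exp (2 * α * k₂ - α * D / σ ^ 2) := by
      unfold lamHat
      rw [div_le_iff₀ (by positivity), mul_add, ← Real.exp_add, ← Real.exp_add]
      have : 2 * α * k₂ - α * D / σ ^ 2 + -(α * rU X (σ ^ 2) Y) / σ ^ 2 =
          -(α * rR X (σ ^ 2) Y) / σ ^ 2 := by
        have : rR X (σ ^ 2) Y = rU X (σ ^ 2) Y + D - 2 * σ ^ 2 * k₂ := by linarith
        rw [this]
        field_simp
        ring
      rw [this]
      linarith [Real.exp_pos (2 * α * k₂ - α * D / σ ^ 2 + -(α * rR X (σ ^ 2) Y) / σ ^ 2)]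
    set t := α * D / σ ^ 2 with ht
    have ht0 : 0 ≤ t := by positivity
    have hDt : D = t * (σ ^ 2 * α⁻¹) := by rw [ht]; field_simp
    have hsq : lamHat α (σ ^ 2) X Y ^ 2 ≤ Real.exp (4 * α * k₂) * Real.exp (-(2 * t)) := by
      calc _ ≤ Real.exp (2 * α * k₂ - t) ^ 2 := pow_le_pow_left₀ hlam0 hlam 2
        _ = _ := by rw [← Real.exp_add, ← Real.exp_nat_mul]; congr 1; push_cast; ring
    have hte : Real.exp (-(2 * t)) * t ≤ 1 := by
      rw [Real.exp_neg, inv_mul_le_iff₀ (Real.exp_pos _)]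
      linarith [Real.add_one_le_exp (2 * t)]
    have hND : N ≤ L⁻¹ * D := by
      rw [le_inv_mul_iff₀ hlm]; exact hray
    calc _ ≤ (Real.exp (4 * α * k₂) * Real.exp (-(2 * t))) * (L⁻¹ * D) := by gcongr
      _ = (L⁻¹ * α⁻¹ * σ ^ 2 * Real.exp (4 * α * k₂)) * (Real.exp (-(2 * t)) * t) := by
        rw [hDt]; ring
      _ ≤ (L⁻¹ * α⁻¹ * σ ^ 2 * Real.exp (4 * α * k₂)) * 1 := by gcongr
      _ = _ := by ring

end
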